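/- Let Ω ⋐ ℂⁿ be a bounded strongly m-pseudoconvex domain and u ∈ SH_m(Ω) ∩ L¹(Ω) with u ≤ 0 on Ω. For 0 < δ < δ₀ := diam(Ω), let u_δ(z) := ∫_Ω u(ζ) χ_δ(z−ζ) dλ_{2n}(ζ) be the δ-regularization of u by convolution with a smooth radial approximate identity χ_δ supported in the ball of radius δ. Then there exists a constant b_n > 0, independent of u and δ, such that ∫_{Ω_δ} (u_δ − u) dλ_{2n} ≤ b_n δ ‖u‖₁, where Ω_δ := {z ∈ Ω : dist(z,∂Ω) > δ}, λ_{2n} is Lebesgue measure, and ‖u‖₁ := ∫_Ω |u| dλ_{2n}. -/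

import Mathlib

/- Preliminary notions for the formalization of results from
"The Hölder continuous subsolution theorem for complex Hessian equations". -/

open MeasureTheory Metric Filter Topology Set
open scoped ENNReal NNReal

noncomputable section

/-- ℂⁿ with its Euclidean structure. -/
abbrev Cn (n : ℕ) : Type := EuclideanSpace ℂ (Fin n)

instance (n : ℕ) : MeasurableSpace (Cn n) := borel _
instance (n : ℕ) : BorelSpace (Cn n) := ⟨rfl⟩
/-- Lebesgue measure `λ_{2n}` on ℂⁿ. -/
instance (n : ℕ) : MeasureSpace (Cn n) :=
  ⟨Measure.map (⇑(EuclideanSpace.equiv (Fin n) ℂ).symm) volume⟩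

/-- Second derivative of `u` at `z` in the directions `v, w`. -/
def d2 {n : ℕ} (u : Cn n → ℝ) (z v w : Cn n) : ℝ :=
  iteratedFDeriv ℝ 2 u z ![v, w]

/-- The complex Hessian matrix `(∂²u/∂z_j ∂z̄_k)_{j,k}` of a real valued function. -/
def complexHessian {n : ℕ} (u : Cn n → ℝ) (z : Cn n) : Matrix (Fin n) (Fin n) ℂ :=
  fun j k =>
    (4 : ℂ)⁻¹ *
      (((d2 u z (EuclideanSpace.single j (1 : ℂ)) (EuclideanSpace.single k (1 : ℂ)) +
            d2 u z (EuclideanSpace.single j Complex.I)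
              (EuclideanSpace.single k Complex.I) : ℝ) : ℂ) +
        Complex.I *
          ((d2 u z (EuclideanSpace.single j (1 : ℂ)) (EuclideanSpace.single k Complex.I) -
              d2 u z (EuclideanSpace.single j Complex.I)
                (EuclideanSpace.single k (1 : ℂ)) : ℝ) : ℂ))

/-- The mixed discriminant of `n` complex `n×n` matrices (polarization formula for `det`).
For Hermitian matrices `A₁, …, Aₙ` representing constant `(1,1)`-forms `θ₁, …, θₙ`, it is the
density of `θ₁ ∧ ⋯ ∧ θₙ` with respect to `βⁿ` (normalized so that the identity gives `1`). -/
def mixedDet (n : ℕ) (A : Fin n → Matrix (Fin n) (Fin n) ℂ) : ℂ :=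
  (n.factorial : ℂ)⁻¹ *
    ∑ S : Finset (Fin n), (-1 : ℂ) ^ (n - S.card) * (∑ i ∈ S, A i).det

/-- Pad a `j`-tuple of matrices with copies of the identity (i.e. with copies of the
standard Kähler form `β`) to obtain an `n`-tuple. -/
def padded (n j : ℕ) (B : Fin j → Matrix (Fin n) (Fin n) ℂ) :
    Fin n → Matrix (Fin n) (Fin n) ℂ :=
  fun i => if h : (i : ℕ) < j then B ⟨i, h⟩ else 1

/-- Density of `θ₁ ∧ ⋯ ∧ θ_j ∧ β^{n-j}` with respect to `βⁿ`, where the `(1,1)`-forms `θ_i`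
are given by matrices `B i`. -/
def mixedHess (n j : ℕ) (B : Fin j → Matrix (Fin n) (Fin n) ℂ) : ℝ :=
  (mixedDet n (padded n j B)).re

/-- A Hermitian matrix `A` (i.e. a constant `(1,1)`-form `θ`) is `m`-positive if
`θ^k ∧ β^{n-k} ≥ 0` for `k = 1, …, m`. -/
def IsMPositiveMatrix (n m : ℕ) (A : Matrix (Fin n) (Fin n) ℂ) : Prop :=
  A.IsHermitian ∧ ∀ k, 1 ≤ k → k ≤ m → 0 ≤ mixedHess n k (fun _ => A)

/-- A test function on `Ω`: smooth with compact support contained in `Ω`. -/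
def IsTestFn (n : ℕ) (Ω : Set (Cn n)) (χ : Cn n → ℝ) : Prop :=
  ContDiff ℝ (⊤ : ℕ∞) χ ∧ HasCompactSupport χ ∧ tsupport χ ⊆ Ω

/-- `u` is `m`-subharmonic on `Ω` : it is upper semicontinuous, locally integrable, and
`dd^c u ∧ θ₁ ∧ ⋯ ∧ θ_{m-1} ∧ β^{n-m} ≥ 0` in the sense of currents on `Ω` for all
`m`-positive constant `(1,1)`-forms `θ₁, …, θ_{m-1}` (the case of all `θ_i = β`
gives distributional subharmonicity). -/
def IsMSubharmonicOn (n m : ℕ) (Ω : Set (Cn n)) (u : Cn n → ℝ) : Prop :=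
  UpperSemicontinuousOn u Ω ∧ LocallyIntegrableOn u Ω volume ∧
  ∀ θ : ℕ → Matrix (Fin n) (Fin n) ℂ, (∀ i, IsMPositiveMatrix n m (θ i)) →
    ∀ χ : Cn n → ℝ, IsTestFn n Ω χ → (∀ z, 0 ≤ χ z) →
      0 ≤ ∫ z in Ω, u z * mixedHess n m
        (fun i : Fin m => if (i : ℕ) = 0 then complexHessian χ z else θ (i : ℕ))

/-- A smooth nonnegative radial function supported in the unit ball with total integral `1`. -/
def IsMollifier (n : ℕ) (χ : Cn n → ℝ) : Prop :=
  ContDiff ℝ (⊤ : ℕ∞) χ ∧ (∀ z, 0 ≤ χ z) ∧ (∀ z w : Cn n, ‖z‖ = ‖w‖ → χ z = χ w) ∧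
  tsupport χ ⊆ closedBall 0 1 ∧ ∫ z, χ z = 1

/-- The rescaled mollifier `χ_δ(ζ) := δ^{-2n} χ(ζ/δ)`. -/
def scaledMollifier (n : ℕ) (χ : Cn n → ℝ) (δ : ℝ) (ζ : Cn n) : ℝ :=
  (δ ^ (2 * n))⁻¹ * χ (δ⁻¹ • ζ)

/-- The `δ`-regularization `u_δ(z) := ∫_Ω u(ζ) χ_δ(z - ζ) dλ_{2n}(ζ)`. -/
def regularize (n : ℕ) (Ω : Set (Cn n)) (χ : Cn n → ℝ) (u : Cn n → ℝ) (δ : ℝ)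
    (z : Cn n) : ℝ :=
  ∫ ζ in Ω, u ζ * scaledMollifier n χ δ (z - ζ)

/-- `μ` is the mixed Hessian measure `dd^c f₀ ∧ ⋯ ∧ dd^c f_{j-1} ∧ β^{n-j}` on `Ω`
(in the sense of Bedford–Taylor/Błocki): for every mollifier, the mixed Hessian densities of
the regularizations converge weakly to `μ` against test functions supported in `Ω`. -/
def IsMixedHessianMeasure (n : ℕ) (Ω : Set (Cn n)) (j : ℕ) (f : ℕ → Cn n → ℝ)
    (μ : Measure (Cn n)) : Prop :=
  ∀ χmol : Cn n → ℝ, IsMollifier n χmol →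
  ∀ χ : Cn n → ℝ, IsTestFn n Ω χ →
    Tendsto (fun δ : ℝ => ∫ z in Ω, χ z * mixedHess n j
        (fun i : Fin j => complexHessian (regularize n Ω χmol (f (i : ℕ)) δ) z))
      (𝓝[>] (0 : ℝ)) (𝓝 (∫ z, χ z ∂μ))

/-- `μ` is the `m`-Hessian measure `(dd^c u)^m ∧ β^{n-m}` of `u` on `Ω`. -/
def IsHessianMeasure (n m : ℕ) (Ω : Set (Cn n)) (u : Cn n → ℝ) (μ : Measure (Cn n)) :
    Prop :=
  IsMixedHessianMeasure n Ω m (fun _ => u) μ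

/-- The `m`-Hessian capacity
`Cap_m(K,Ω) = sup { ∫_K (dd^c u)^m ∧ β^{n-m} : u ∈ SH_m(Ω), -1 ≤ u ≤ 0 }`. -/
def capm (n m : ℕ) (Ω K : Set (Cn n)) : ℝ≥0∞ :=
  ⨆ (u : Cn n → ℝ)
    (_ : IsMSubharmonicOn n m Ω u ∧ ∀ z ∈ Ω, -1 ≤ u z ∧ u z ≤ 0)
    (μ : Measure (Cn n)) (_ : IsHessianMeasure n m Ω u μ), μ K

/-- `ρ` is a defining function exhibiting `Ω` as a bounded strongly `m`-pseudoconvex domain: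
`ρ` is smooth and strictly `m`-subharmonic on a neighborhood of `closure Ω`
(normalized so that `(dd^c ρ)^k ∧ β^{n-k} ≥ β^n` for `1 ≤ k ≤ m`), `Ω = {ρ < 0}`
near `closure Ω` and `∇ρ ≠ 0` on `∂Ω = {ρ = 0}`. -/
def IsSPCDefining (n m : ℕ) (Ω : Set (Cn n)) (ρ : Cn n → ℝ) : Prop :=
  IsOpen Ω ∧ Bornology.IsBounded Ω ∧ ContDiff ℝ (⊤ : ℕ∞) ρ ∧
  ∃ U : Set (Cn n), IsOpen U ∧ closure Ω ⊆ U ∧ Ω = {z ∈ U | ρ z < 0} ∧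
    (∀ z ∈ frontier Ω, ρ z = 0 ∧ fderiv ℝ ρ z ≠ 0) ∧
    ∀ z ∈ U, ∀ k, 1 ≤ k → k ≤ m →
      1 ≤ mixedHess n k (fun _ => complexHessian ρ z)

/-- `Ω ⋐ ℂⁿ` is a bounded strongly `m`-pseudoconvex domain. -/
def StronglyMPseudoconvex (n m : ℕ) (Ω : Set (Cn n)) : Prop :=
  ∃ ρ : Cn n → ℝ, IsSPCDefining n m Ω ρ

/-- `u` has boundary value `0` at every point of `∂Ω`. -/
def ZeroBoundaryValues {n : ℕ} (Ω : Set (Cn n)) (u : Cn n → ℝ) : Prop :=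
  ∀ ζ ∈ frontier Ω, Tendsto u (𝓝[Ω] ζ) (𝓝 (0 : ℝ))

/-- `φ ∈ 𝓔⁰_m(Ω)`: bounded, nonpositive, `m`-subharmonic with zero boundary values and
finite total Hessian mass. -/
def MemE0 (n m : ℕ) (Ω : Set (Cn n)) (φ : Cn n → ℝ) : Prop :=
  IsMSubharmonicOn n m Ω φ ∧ (∀ z ∈ Ω, φ z ≤ 0) ∧ (∃ M : ℝ, ∀ z ∈ Ω, -M ≤ φ z) ∧
  ZeroBoundaryValues Ω φ ∧
  ∃ μ : Measure (Cn n), IsHessianMeasure n m Ω φ μ ∧ μ Ω ≠ ⊤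

/-- `f` is Hölder continuous with exponent `α` and constant `κ` on `s`. -/
def HolderOn {n : ℕ} (κ α : ℝ) (f : Cn n → ℝ) (s : Set (Cn n)) : Prop :=
  ∀ z ∈ s, ∀ w ∈ s, |f z - f w| ≤ κ * dist z w ^ α

/-- The upper semicontinuous regularization of `f`. -/
def uscReg {n : ℕ} (f : Cn n → ℝ) (z : Cn n) : ℝ := Filter.limsup f (𝓝 z)

/-- The `m`-subharmonic envelope `P_{m,Ω}(h)`: the upper semicontinuous regularization
of the supremum of all `m`-subharmonic functions on `Ω` lying below `h`. -/
def envelope (n m : ℕ) (Ω : Set (Cn n)) (h : Cn n → ℝ) : Cn n → ℝ :=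
  uscReg (fun z => sSup {t : ℝ | ∃ v : Cn n → ℝ,
    IsMSubharmonicOn n m Ω v ∧ (∀ w ∈ Ω, v w ≤ h w) ∧ t = v z})

/-- The modulus of continuity of `f` on `s` at scale `δ`. -/
def modulusOfContinuity {n : ℕ} (f : Cn n → ℝ) (s : Set (Cn n)) (δ : ℝ) : ℝ :=
  sSup {t : ℝ | ∃ z ∈ s, ∃ w ∈ s, dist z w ≤ δ ∧ t = |f z - f w|}

/-- `g ∈ C^{1,1}(∂Ω)`: `g` extends to a `C^{1,1}` function near `∂Ω`. -/
def IsC11Boundary {n : ℕ} (Ω : Set (Cn n)) (g : Cn n → ℝ) : Prop :=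
  ∃ G : Cn n → ℝ, Set.EqOn G g (frontier Ω) ∧ ContDiff ℝ 1 G ∧
    ∃ L : NNReal, LipschitzWith L (fderiv ℝ G)

/-! Let `η` be the compactly supported potential of the radial kernel `χ`, `∇η(y) = -χ(y) y`.
Averaging a cutoff function `f` of `Ω_δ` over the dilates of `η` by `t ∈ (0, δ]`, with weight `t`,
gives a function `Ψ ≥ 0` with `ΔΨ = χ_δ ∗ f - f` and `Ψ = O(δ²)`, so that
`∫ (u_δ - u) f = ∫ u ΔΨ`. A defining function satisfies `-ρ ≥ c dist(·, ∂Ω)`; hence where `-ρ < t`,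
`t = c δ`, the function `f` vanishes and `ΔΨ ≥ 0`. With `T ≈ δ²` an upper bound of `Ψ` and `h` a
smooth convex ramp, `h((4 / t) (-ρ) - (2 / T) Ψ)` is then an admissible test function in
`∫ u Δφ ≥ 0`: it vanishes near `∂Ω`, and its slope is one where `-ρ ≥ t`. This gives
`(2 / T) ∫ u ΔΨ ≤ (4 / t) sup |Δρ| ‖u‖₁`, and `T / t` is of order `δ`. -/

section BoundaryDistance

variable {E : Type*} [NormedAddCommGroup E] [NormedSpace ℝ E]

lemma ball_infDist_frontier_subset {Ω : Set E} {z : E} (hz : z ∈ Ω) :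
    ball z (infDist z (frontier Ω)) ⊆ Ω := by
  rcases (infDist_nonneg (x := z) (s := frontier Ω)).eq_or_lt with hd | hd
  · simp [← hd]
  have hball : ball z (infDist z (frontier Ω)) ⊆ interior Ω ∪ (closure Ω)ᶜ := fun x hx => by
    have hx_frontier : x ∉ frontier Ω := fun h => (infDist_le_dist_of_mem h).not_gt (mem_ball'.1 hx)
    by_cases hx_closure : x ∈ closure Ω
    · exact .inl (by_contra fun h => hx_frontier ⟨hx_closure, h⟩)
    · exact .inr hx_closure
  have hz_interior : z ∈ interior Ω :=
    (hball (mem_ball_self hd)).resolve_right fun h => h (subset_closure hz)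
  exact ((convex_ball z _).isPreconnected.subset_left_of_subset_union isOpen_interior
    isClosed_closure.isOpen_compl (disjoint_compl_right_iff_subset.2 interior_subset_closure) hball
    ⟨z, mem_ball_self hd, hz_interior⟩).trans interior_subset

lemma exists_direction_mul_le_sub {ρ : E → ℝ} {L : E →L[ℝ] ℝ} {z₀ : E}
    (hρ : HasStrictFDerivAt ρ L z₀) (hL : L ≠ 0) :
    ∃ v : E, ‖v‖ = 1 ∧ ∃ c > 0, ∃ r > 0, ∀ z ∈ ball z₀ r, ∀ s ∈ Ioo 0 r,
      c * s ≤ ρ (z + s • v) - ρ z := by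
  obtain ⟨v, hv, hLv⟩ : ∃ v : E, ‖v‖ = 1 ∧ 0 < L v := by
    obtain ⟨w, hw⟩ : ∃ w, 0 < L w := by
      obtain ⟨w, hw⟩ := DFunLike.ne_iff.1 hL
      rcases hw.lt_or_gt with h | h
      · exact ⟨-w, by simpa using h⟩
      · exact ⟨w, h⟩
    have hw0 : w ≠ 0 := by rintro rfl; simp at hw
    refine ⟨‖w‖⁻¹ • w, norm_smul_inv_norm hw0, ?_⟩
    rw [map_smul, smul_eq_mul]
    positivity
  obtain ⟨r, hr, hbound⟩ := Metric.eventually_nhds_iff.1 (hρ.isLittleO.bound (half_pos hLv))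
  refine ⟨v, hv, L v / 2, half_pos hLv, r / 2, half_pos hr, fun z hz s hs => ?_⟩
  have hs_norm : ‖s • v‖ = s := by rw [norm_smul, hv, mul_one, Real.norm_of_nonneg hs.1.le]
  have hzs : dist (z + s • v, z) (z₀, z₀) < r := by
    refine max_lt ?_ (by linarith [mem_ball.1 hz])
    have := dist_triangle (z + s • v) z z₀
    rw [dist_self_add_left, hs_norm] at this
    linarith [mem_ball.1 hz, hs.2]
  have := neg_le_of_abs_le (hbound hzs)
  simp only [add_sub_cancel_left, map_smul, smul_eq_mul, hs_norm] at this
  linarith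

/-- `ρ` is a smooth defining function of `Ω` with nonvanishing gradient on the boundary; nothing
is required of `ρ` outside the closure of `Ω`. -/
structure IsSmoothDefiningFunction (Ω : Set E) (ρ : E → ℝ) : Prop where
  contDiff : ContDiff ℝ (⊤ : ℕ∞) ρ
  neg : ∀ z ∈ Ω, ρ z < 0
  eq_zero : ∀ z ∈ frontier Ω, ρ z = 0
  fderiv_ne_zero : ∀ z ∈ frontier Ω, fderiv ℝ ρ z ≠ 0

lemma exists_pos_forall_mul_le_of_isCompact_closure {X : Type*} [TopologicalSpace X] {s : Set X}
    (hs : IsCompact (closure s)) {f g : X → ℝ} (hf : ∀ x ∈ s, 0 ≤ f x)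
    (hfg : ∀ x ∈ closure s, ∃ c > 0, ∀ᶠ y in 𝓝[s] x, c * f y ≤ g y) :
    ∃ c > 0, ∀ x ∈ s, c * f x ≤ g x := by
  suffices h : ∃ c > 0, ∀ x ∈ closure s, x ∈ s → c * f x ≤ g x by
    obtain ⟨c, hc, h⟩ := h
    exact ⟨c, hc, fun x hx => h x (subset_closure hx) hx⟩
  refine hs.induction_on (p := fun t => ∃ c > 0, ∀ x ∈ t, x ∈ s → c * f x ≤ g x)
    ⟨1, one_pos, by simp⟩ ?_ ?_ fun x hx => ?_
  · rintro t₁ t₂ ht ⟨c, hc, h⟩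
    exact ⟨c, hc, fun x hx => h x (ht hx)⟩
  · rintro t₁ t₂ ⟨c₁, hc₁, h₁⟩ ⟨c₂, hc₂, h₂⟩
    refine ⟨min c₁ c₂, lt_min hc₁ hc₂, fun x hx hxs => ?_⟩
    have := hf x hxs
    rcases hx with hx | hx
    · exact le_trans (by gcongr; exact min_le_left _ _) (h₁ x hx hxs)
    · exact le_trans (by gcongr; exact min_le_right _ _) (h₂ x hx hxs)
  · obtain ⟨c, hc, h⟩ := hfg x hx
    exact ⟨_, mem_nhdsWithin_of_mem_nhds (eventually_nhdsWithin_iff.1 h), c, hc, fun _ => id⟩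

namespace IsSmoothDefiningFunction

variable {Ω : Set E} {ρ : E → ℝ}

lemma eventually_mul_infDist_frontier_le (hρ : IsSmoothDefiningFunction Ω ρ) {z₀ : E}
    (hz₀ : z₀ ∈ frontier Ω) :
    ∃ c > 0, ∀ᶠ z in 𝓝[Ω] z₀, c * infDist z (frontier Ω) ≤ -ρ z := by
  obtain ⟨v, hv, c, hc, r, hr, hincr⟩ := exists_direction_mul_le_sub
    (hρ.contDiff.contDiffAt.hasStrictFDerivAt (by simp)) (hρ.fderiv_ne_zero z₀ hz₀)
  refine ⟨c / 2, half_pos hc, ?_⟩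
  filter_upwards [self_mem_nhdsWithin, mem_nhdsWithin_of_mem_nhds (ball_mem_nhds z₀ hr)]
    with z hzΩ hz
  rcases (infDist_nonneg (x := z) (s := frontier Ω)).eq_or_lt with hd | hd
  · rw [← hd, mul_zero]
    exact (neg_pos.2 (hρ.neg z hzΩ)).le
  set s := infDist z (frontier Ω) / 2 with hs
  have hsr : s < r := by linarith [infDist_le_dist_of_mem (x := z) hz₀, mem_ball.1 hz]
  have hmem : z + s • v ∈ Ω := by
    refine ball_infDist_frontier_subset hzΩ ?_
    rw [mem_ball, dist_self_add_left, norm_smul, hv, mul_one, Real.norm_of_nonneg (by positivity)]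
    exact half_lt_self hd
  calc c / 2 * infDist z (frontier Ω) = c * s := by rw [hs]; ring
    _ ≤ ρ (z + s • v) - ρ z := hincr z hz s ⟨half_pos hd, hsr⟩
    _ ≤ -ρ z := by linarith [hρ.neg _ hmem]

lemma exists_mul_infDist_frontier_le (hρ : IsSmoothDefiningFunction Ω ρ)
    (hcpt : IsCompact (closure Ω)) :
    ∃ c > 0, ∀ z ∈ Ω, c * infDist z (frontier Ω) ≤ -ρ z := by
  refine exists_pos_forall_mul_le_of_isCompact_closure hcpt (fun z _ => infDist_nonneg)
    fun z₀ hz₀ => ?_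
  by_cases hint : z₀ ∈ interior Ω
  · have hlim : Tendsto (fun c : ℝ => c * infDist z₀ (frontier Ω)) (𝓝[>] 0) (𝓝 0) :=
      (Continuous.tendsto' (by fun_prop) _ _ (by simp)).mono_left nhdsWithin_le_nhds
    obtain ⟨c, hlt, hc⟩ := ((hlim.eventually_lt_const
      (neg_pos.2 (hρ.neg z₀ (interior_subset hint)))).and self_mem_nhdsWithin).exists
    refine ⟨c, hc, nhdsWithin_le_nhds ?_⟩
    exact ((continuous_const.mul (continuous_infDist_pt _)).continuousAt.eventually_lt
      hρ.contDiff.continuous.neg.continuousAt hlt).mono fun _ => le_of_lt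
  · exact hρ.eventually_mul_infDist_frontier_le ⟨hz₀, hint⟩

lemma closure_inter_superlevel_subset (hρ : IsSmoothDefiningFunction Ω ρ) {t : ℝ} (ht : 0 < t) :
    closure Ω ∩ {z | t ≤ -ρ z} ⊆ Ω := by
  rintro z ⟨hz, hzt⟩
  by_contra hzΩ
  have := hρ.eq_zero z ⟨hz, fun h => hzΩ (interior_subset h)⟩
  rw [mem_ofPred_eq, this] at hzt
  linarith

end IsSmoothDefiningFunction

end BoundaryDistance

section Laplacian

open InnerProductSpace Laplacian

variable {E : Type*} [NormedAddCommGroup E] [InnerProductSpace ℝ E] [FiniteDimensional ℝ E]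

variable (E) in
/-- The trace of a bilinear form with respect to the inner product of `E`, computed in
`stdOrthonormalBasis ℝ E`. The Laplacian is the trace of the second derivative. -/
def bilinTrace : (E →L[ℝ] E →L[ℝ] ℝ) →L[ℝ] ℝ :=
  ∑ i, (ContinuousLinearMap.apply ℝ ℝ (stdOrthonormalBasis ℝ E i)).comp
    (ContinuousLinearMap.apply ℝ (E →L[ℝ] ℝ) (stdOrthonormalBasis ℝ E i))

lemma bilinTrace_apply (B : E →L[ℝ] E →L[ℝ] ℝ) :
    bilinTrace E B = ∑ i, B (stdOrthonormalBasis ℝ E i) (stdOrthonormalBasis ℝ E i) := by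
  simp [bilinTrace]

lemma laplacian_eq_bilinTrace (f : E → ℝ) :
    Δ f = fun z => bilinTrace E (fderiv ℝ (fderiv ℝ f) z) := by
  funext z
  simp [laplacian_eq_iteratedFDeriv_stdOrthonormalBasis, iteratedFDeriv_two_apply,
    bilinTrace_apply]

lemma continuous_laplacian {f : E → ℝ} (hf : ContDiff ℝ 2 f) : Continuous (Δ f) := by
  rw [laplacian_eq_bilinTrace]
  exact (bilinTrace E).continuous.comp
    ((hf.fderiv_right (m := 1) (by norm_num)).continuous_fderiv one_ne_zero)

lemma hasCompactSupport_laplacian {f : E → ℝ} (hf : HasCompactSupport f) :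
    HasCompactSupport (Δ f) := by
  rw [laplacian_eq_bilinTrace]
  exact ((hf.fderiv ℝ).fderiv ℝ).comp_left (map_zero _)

lemma deriv_mul_laplacian_le_laplacian_comp {h : ℝ → ℝ} {w : E → ℝ} (hh : ContDiff ℝ 2 h)
    (hmono : Monotone (deriv h)) (hw : ContDiff ℝ 2 w) (z : E) :
    deriv h (w z) * Δ w z ≤ Δ (fun x => h (w x)) z := by
  have hdw : Differentiable ℝ w := hw.differentiable two_ne_zero
  have hd2w : Differentiable ℝ (fderiv ℝ w) :=
    (hw.fderiv_right (m := 1) (by norm_num)).differentiable one_ne_zero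
  have hdh : Differentiable ℝ (deriv h) :=
    ((contDiff_succ_iff_deriv (n := 1)).1 hh).2.2.differentiable one_ne_zero
  have hfst : fderiv ℝ (fun x => h (w x)) = fun x => deriv h (w x) • fderiv ℝ w x := funext fun x =>
    ((hh.differentiable two_ne_zero (w x)).hasDerivAt.comp_hasFDerivAt x (hdw x).hasFDerivAt).fderiv
  have hsnd := (((hdh (w z)).hasDerivAt.comp_hasFDerivAt z (hdw z).hasFDerivAt).fun_smul
    (hd2w z).hasFDerivAt).fderiv
  simp only [laplacian_eq_bilinTrace, bilinTrace_apply, Finset.mul_sum, hfst]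
  refine Finset.sum_le_sum fun i _ => ?_
  set e := stdOrthonormalBasis ℝ E i
  have hconv : 0 ≤ deriv (deriv h) (w z) * (fderiv ℝ w z e * fderiv ℝ w z e) :=
    mul_nonneg hmono.deriv_nonneg (mul_self_nonneg _)
  simp only [Function.comp_apply] at hsnd
  simp only [hsnd, add_apply, smul_apply, ContinuousLinearMap.smulRight_apply, smul_eq_mul]
  linarith

end Laplacian

section TranslateAverage

/-- The average `z ↦ ∫ a(x) f(z + T x) dν(x)` of the translates of `f` by the vectors `T x`, with
weight `a`. -/
def translateAverage {X E F : Type*} [MeasurableSpace X] [NormedAddCommGroup E]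
    [NormedAddCommGroup F] [NormedSpace ℝ F] (ν : Measure X) (a : X → ℝ) (T : X → E) (f : E → F)
    (z : E) : F :=
  ∫ x, a x • f (z + T x) ∂ν

variable {X : Type*} [MeasurableSpace X] {ν : Measure X} {a : X → ℝ}
  {E F : Type*} [NormedAddCommGroup E] [NormedAddCommGroup F] [NormedSpace ℝ F]
  {T : X → E} {f : E → F}

lemma integrable_translateAverage (ha : Integrable a ν) (hT : AEStronglyMeasurable T ν)
    (hf : Continuous f) (hc : HasCompactSupport f) (z : E) :
    Integrable (fun x => a x • f (z + T x)) ν := by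
  obtain ⟨C, hC⟩ := hf.bounded_above_of_compact_support hc
  exact ha.smul_bdd C (hf.comp_aestronglyMeasurable (aestronglyMeasurable_const.add hT))
    (Eventually.of_forall fun x => hC _)

lemma translateAverage_nonneg (ha : 0 ≤ᵐ[ν] a) {f : E → ℝ} (hf : ∀ z, 0 ≤ f z) (z : E) :
    0 ≤ translateAverage ν a T f z :=
  integral_nonneg_of_ae (ha.mono fun _ hx => mul_nonneg hx (hf _))

lemma translateAverage_le_integral (ha : 0 ≤ᵐ[ν] a) (ha_int : Integrable a ν) {f : E → ℝ}
    (hf : ∀ z, 0 ≤ f z) (hf₁ : ∀ z, f z ≤ 1) (z : E) :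
    translateAverage ν a T f z ≤ ∫ x, a x ∂ν :=
  integral_mono_of_nonneg (ha.mono fun _ hx => mul_nonneg hx (hf _)) ha_int
    (ha.mono fun _ hx => mul_le_of_le_one_right hx (hf₁ _))

variable [NormedSpace ℝ E]

lemma hasFDerivAt_translateAverage (ha : Integrable a ν) (hT : AEStronglyMeasurable T ν)
    (hf : ContDiff ℝ 1 f) (hc : HasCompactSupport f) (z : E) :
    HasFDerivAt (translateAverage ν a T f) (translateAverage ν a T (fderiv ℝ f) z) z := by
  have hf' : Continuous (fderiv ℝ f) := hf.continuous_fderiv one_ne_zero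
  obtain ⟨C, hC⟩ := hf'.bounded_above_of_compact_support (hc.fderiv ℝ)
  refine hasFDerivAt_integral_of_dominated_of_fderiv_le (s := univ) (bound := fun x => ‖a x‖ * C)
    (F' := fun y x => a x • fderiv ℝ f (y + T x)) univ_mem
    (Eventually.of_forall fun y =>
      (integrable_translateAverage ha hT hf.continuous hc y).aestronglyMeasurable)
    (integrable_translateAverage ha hT hf.continuous hc z)
    (integrable_translateAverage ha hT hf' (hc.fderiv ℝ) z).aestronglyMeasurable
    (Eventually.of_forall fun x y _ => ?_) (ha.norm.mul_const C)
    (Eventually.of_forall fun x y _ => ?_)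
  · rw [norm_smul]
    gcongr
    exact hC _
  · exact (((hf.differentiable one_ne_zero _).hasFDerivAt.comp y
      ((hasFDerivAt_id y).add_const (T x))).const_smul (a x))

lemma fderiv_translateAverage (ha : Integrable a ν) (hT : AEStronglyMeasurable T ν)
    (hf : ContDiff ℝ 1 f) (hc : HasCompactSupport f) :
    fderiv ℝ (translateAverage ν a T f) = translateAverage ν a T (fderiv ℝ f) :=
  funext fun z => (hasFDerivAt_translateAverage ha hT hf hc z).fderiv

lemma iteratedFDeriv_translateAverage (ha : Integrable a ν) (hT : AEStronglyMeasurable T ν)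
    (hc : HasCompactSupport f) {k : ℕ} (hf : ContDiff ℝ k f) :
    iteratedFDeriv ℝ k (translateAverage ν a T f) =
      translateAverage ν a T (iteratedFDeriv ℝ k f) := by
  induction k with
  | zero =>
    funext z
    simp only [iteratedFDeriv_zero_eq_comp, Function.comp_apply, translateAverage, ← map_smul]
    exact ((continuousMultilinearCurryFin0 ℝ E F).symm.toContinuousLinearEquiv.integral_comp_comm
      fun x => a x • f (z + T x)).symm
  | succ k ih =>
    have hfk : ContDiff ℝ 1 (iteratedFDeriv ℝ k f) := hf.iteratedFDeriv_right (by norm_cast; omega)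
    rw [iteratedFDeriv_succ_eq_comp_left, iteratedFDeriv_succ_eq_comp_left,
      ih (hf.of_le (by norm_cast; omega)),
      fderiv_translateAverage ha hT hfk (hc.iteratedFDeriv k)]
    funext z
    simp only [Function.comp_apply, translateAverage, ← map_smul]
    exact (ContinuousLinearEquiv.integral_comp_comm (𝕜 := ℝ) (F := E [×k + 1]→L[ℝ] F)
      (continuousMultilinearCurryLeftEquiv ℝ (fun _ => E) F).symm.toContinuousLinearEquiv
      fun x => a x • fderiv ℝ (iteratedFDeriv ℝ k f) (z + T x)).symm

lemma contDiff_translateAverage (ha : Integrable a ν) (hT : AEStronglyMeasurable T ν)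
    (hf : ContDiff ℝ (⊤ : ℕ∞) f) (hc : HasCompactSupport f) :
    ContDiff ℝ (⊤ : ℕ∞) (translateAverage ν a T f) := by
  refine contDiff_of_differentiable_iteratedFDeriv fun k _ => ?_
  rw [iteratedFDeriv_translateAverage ha hT hc (hf.of_le (by exact_mod_cast le_top))]
  exact fun z => (hasFDerivAt_translateAverage ha hT
    (hf.iteratedFDeriv_right (by exact_mod_cast le_top)) (hc.iteratedFDeriv k) z).differentiableAt

open Laplacian in
lemma laplacian_translateAverage {E : Type*} [NormedAddCommGroup E] [InnerProductSpace ℝ E]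
    [FiniteDimensional ℝ E] {T : X → E} {f : E → ℝ} (ha : Integrable a ν)
    (hT : AEStronglyMeasurable T ν) (hf : ContDiff ℝ 2 f) (hc : HasCompactSupport f) (z : E) :
    Δ (translateAverage ν a T f) z = translateAverage ν a T (Δ f) z := by
  have hf' : ContDiff ℝ 1 (fderiv ℝ f) := hf.fderiv_right (by norm_num)
  have hint := integrable_translateAverage ha hT (hf'.continuous_fderiv one_ne_zero)
    ((hc.fderiv ℝ).fderiv ℝ) z
  rw [laplacian_eq_bilinTrace, fderiv_translateAverage ha hT (hf.of_le (by norm_num)) hc,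
    fderiv_translateAverage ha hT hf' (hc.fderiv ℝ)]
  simp only [translateAverage, ← ContinuousLinearMap.integral_comp_comm _ hint, map_smul,
    laplacian_eq_bilinTrace]

end TranslateAverage

section RadialKernel

open Laplacian

variable {E : Type*} [NormedAddCommGroup E] [InnerProductSpace ℝ E] {χ η : E → ℝ}

/-- `η` is a compactly supported potential of the kernel `χ`: a nonnegative function with
`∇η(y) = -χ(y) y`. Integrating by parts against it trades the radial derivative of a function,
weighted by `χ`, for the Laplacian, weighted by `η`. -/
structure IsKernelPotential (χ η : E → ℝ) : Prop where
  hasFDerivAt : ∀ y, HasFDerivAt η (-(χ y) • innerSL ℝ y) y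
  nonneg : ∀ y, 0 ≤ η y
  hasCompactSupport : HasCompactSupport η

/-- `χ` is a radial averaging kernel: continuous, nonnegative, compactly supported, depending on
`‖x‖` only, and of total mass one for `μ`. -/
structure IsRadialKernel [MeasurableSpace E] (μ : Measure E) (χ : E → ℝ) : Prop where
  continuous : Continuous χ
  nonneg : ∀ x, 0 ≤ χ x
  radial : ∀ x y, ‖x‖ = ‖y‖ → χ x = χ y
  hasCompactSupport : HasCompactSupport χ
  integral_eq_one : ∫ x, χ x ∂μ = 1

lemma IsRadialKernel.integrable {E : Type*} [NormedAddCommGroup E] [MeasurableSpace E]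
    [BorelSpace E] {μ : Measure E} [IsFiniteMeasureOnCompacts μ] {χ : E → ℝ}
    (hχ : IsRadialKernel μ χ) : Integrable χ μ :=
  hχ.continuous.integrable_of_hasCompactSupport hχ.hasCompactSupport

lemma exists_radial_profile [Nontrivial E] (hcont : Continuous χ) (hpos : ∀ x, 0 ≤ χ x)
    (hradial : ∀ x y, ‖x‖ = ‖y‖ → χ x = χ y) (hcpt : HasCompactSupport χ) :
    ∃ (k : ℝ → ℝ) (R : ℝ), Continuous k ∧ (∀ s, 0 ≤ k s) ∧ (∀ s, R ≤ s → k s = 0) ∧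
      ∀ y, χ y = k (‖y‖ ^ 2) := by
  obtain ⟨e, he⟩ := exists_norm_eq E zero_le_one
  obtain ⟨R, -, hχR⟩ := hcpt.exists_pos_le_norm
  have hnorm (s : ℝ) : ‖√s • e‖ = √s := by
    rw [norm_smul, he, mul_one, Real.norm_of_nonneg (Real.sqrt_nonneg s)]
  refine ⟨fun s => χ (√s • e), R ^ 2, by fun_prop, fun s => hpos _, fun s hs => hχR _ ?_,
    fun y => hradial _ _ ?_⟩
  · rw [hnorm]
    exact Real.le_sqrt_of_sq_le hs
  · rw [hnorm, Real.sqrt_sq (norm_nonneg y)]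

lemma exists_isKernelPotential [ProperSpace E] [Nontrivial E] (hcont : Continuous χ)
    (hpos : ∀ x, 0 ≤ χ x) (hradial : ∀ x y, ‖x‖ = ‖y‖ → χ x = χ y) (hcpt : HasCompactSupport χ) :
    ∃ η, IsKernelPotential χ η := by
  obtain ⟨k, R, hk, hk_nonneg, hkR, hχk⟩ := exists_radial_profile hcont hpos hradial hcpt
  have htail {s : ℝ} (hs : R ≤ s) : ∫ x in s..R, k x = 0 := by
    refine intervalIntegral.integral_zero_ae (Eventually.of_forall fun x hx => hkR x ?_)
    rw [uIoc_of_ge hs] at hx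
    exact hx.1.le
  refine ⟨fun y => 2⁻¹ * ∫ s in ‖y‖ ^ 2..R, k s, fun y => ?_, fun y => ?_, ?_⟩
  · have hprim := intervalIntegral.integral_hasDerivAt_left (hk.intervalIntegrable (‖y‖ ^ 2) R)
      (hk.stronglyMeasurableAtFilter _ _) hk.continuousAt
    refine ((hprim.comp_hasFDerivAt y (hasFDerivAt_id y).norm_sq).const_mul 2⁻¹).congr_fderiv ?_
    ext v
    simp [hχk]
    ring
  · rcases le_total (‖y‖ ^ 2) R with h | h
    · exact mul_nonneg (by norm_num) (intervalIntegral.integral_nonneg h fun s _ => hk_nonneg s)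
    · simp [htail h]
  · refine HasCompactSupport.intro (isCompact_closedBall (0 : E) √R) fun y hy => ?_
    rw [mem_closedBall_zero_iff, not_le] at hy
    simp [htail (Real.lt_sq_of_sqrt_lt hy).le]

namespace IsKernelPotential

lemma continuous (hη : IsKernelPotential χ η) : Continuous η :=
  continuous_iff_continuousAt.2 fun y => (hη.hasFDerivAt y).continuousAt

variable [MeasurableSpace E] [BorelSpace E] {μ : Measure E}

lemma integrable [IsFiniteMeasureOnCompacts μ] (hη : IsKernelPotential χ η) : Integrable η μ :=
  hη.continuous.integrable_of_hasCompactSupport hη.hasCompactSupport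

variable [FiniteDimensional ℝ E] [μ.IsAddHaarMeasure]

lemma integral_mul_fderiv_apply (hη : IsKernelPotential χ η) (hχ : Continuous χ)
    (hχc : HasCompactSupport χ) {g : E → ℝ} (hg : ContDiff ℝ 1 g) (e : E) :
    ∫ y, η y * fderiv ℝ g y e ∂μ = ∫ y, χ y * (inner ℝ y e * g y) ∂μ := by
  have : Continuous (fderiv ℝ g) := hg.continuous_fderiv one_ne_zero
  have hη' (y : E) : fderiv ℝ η y e * g y = -(χ y * (inner ℝ y e * g y)) := by
    rw [(hη.hasFDerivAt y).fderiv]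
    simp [mul_assoc]
  rw [integral_mul_fderiv_eq_neg_fderiv_mul_of_integrable ?_ ?_ ?_
    (fun y _ => (hη.hasFDerivAt y).differentiableAt) (fun y _ => hg.differentiable one_ne_zero y)]
  · simp only [hη', integral_neg, neg_neg]
  · simp only [hη']
    exact (Continuous.integrable_of_hasCompactSupport (by fun_prop) hχc.mul_right).neg
  · exact (hη.continuous.mul (by fun_prop)).integrable_of_hasCompactSupport
      hη.hasCompactSupport.mul_right
  · exact (hη.continuous.mul (by fun_prop)).integrable_of_hasCompactSupport
      hη.hasCompactSupport.mul_right

lemma integral_mul_bilinTrace_fderiv (hη : IsKernelPotential χ η) (hχ : Continuous χ)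
    (hχc : HasCompactSupport χ) {G : E → E →L[ℝ] ℝ} (hG : ContDiff ℝ 1 G) :
    ∫ y, η y * bilinTrace E (fderiv ℝ G y) ∂μ = ∫ y, χ y * G y y ∂μ := by
  have : Continuous (fderiv ℝ G) := hG.continuous_fderiv one_ne_zero
  set b := stdOrthonormalBasis ℝ E
  have hcoord (e y : E) : fderiv ℝ G y e e = fderiv ℝ (fun y => G y e) y e := by
    rw [fderiv_clm_apply (hG.differentiable one_ne_zero y) (differentiableAt_const e)]
    simp
  have hexpand (y : E) : G y y = ∑ i, inner ℝ y (b i) * G y (b i) := by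
    nth_rewrite 2 [← b.sum_repr' y]
    simp only [map_sum, map_smul, smul_eq_mul, real_inner_comm y]
  simp only [hexpand, bilinTrace_apply, Finset.mul_sum]
  rw [integral_finsetSum _ fun i _ => ?_, integral_finsetSum _ fun i _ => ?_]
  · refine Finset.sum_congr rfl fun i _ => ?_
    simp only [hcoord]
    exact hη.integral_mul_fderiv_apply hχ hχc (hG.clm_apply contDiff_const) (b i)
  · exact Continuous.integrable_of_hasCompactSupport (by fun_prop) hχc.mul_right
  · exact (hη.continuous.mul (by fun_prop)).integrable_of_hasCompactSupport
      hη.hasCompactSupport.mul_right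

lemma integral_mul_fderiv_add_smul (hη : IsKernelPotential χ η) (hχ : Continuous χ)
    (hχc : HasCompactSupport χ) {f : E → ℝ} (hf : ContDiff ℝ 2 f) (z : E) (t : ℝ) :
    ∫ y, χ y * fderiv ℝ f (z + t • y) y ∂μ = t * translateAverage μ η (t • ·) (Δ f) z := by
  have hf' : ContDiff ℝ 1 (fderiv ℝ f) := hf.fderiv_right (by norm_num)
  have hderiv (y : E) : fderiv ℝ (fun y => fderiv ℝ f (z + t • y)) y =
      t • fderiv ℝ (fderiv ℝ f) (z + t • y) := by
    rw [fderiv_comp_smul (f := fun y => fderiv ℝ f (z + y)), fderiv_comp_add_left]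
  rw [← hη.integral_mul_bilinTrace_fderiv hχ hχc (G := fun y => fderiv ℝ f (z + t • y))
    (hf'.comp (by fun_prop)), translateAverage, ← integral_const_mul]
  simp only [hderiv, map_smul, smul_eq_mul, laplacian_eq_bilinTrace, mul_left_comm]

lemma hasDerivAt_translateAverage_smul (hη : IsKernelPotential χ η) (hχ : Continuous χ)
    (hχc : HasCompactSupport χ) {f : E → ℝ} (hf : ContDiff ℝ 2 f) (hfc : HasCompactSupport f)
    (z : E) (t : ℝ) :
    HasDerivAt (fun t : ℝ => translateAverage μ χ (t • ·) f z)
      (t * translateAverage μ η (t • ·) (Δ f) z) t := by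
  have hf' : Continuous (fderiv ℝ f) := hf.continuous_fderiv two_ne_zero
  obtain ⟨C, hC⟩ := hf'.bounded_above_of_compact_support (hfc.fderiv ℝ)
  have hC₀ : 0 ≤ C := (norm_nonneg _).trans (hC 0)
  have hbound_int : Integrable (fun y => χ y * (C * ‖y‖)) μ :=
    Continuous.integrable_of_hasCompactSupport (by fun_prop) hχc.mul_right
  rw [← hη.integral_mul_fderiv_add_smul hχ hχc hf]
  refine (hasDerivAt_integral_of_dominated_loc_of_deriv_le (s := univ)
    (bound := fun y => ‖χ y * (C * ‖y‖)‖) univ_mem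
    (F' := fun t y => χ y * fderiv ℝ f (z + t • y) y) (Eventually.of_forall fun s => ?_) ?_ ?_
    (Eventually.of_forall fun y s _ => ?_) hbound_int.norm
    (Eventually.of_forall fun y s _ => ?_)).2
  · exact (hχ.smul (hf.continuous.comp (by fun_prop))).aestronglyMeasurable
  · exact (hχ.smul (hf.continuous.comp (by fun_prop))).integrable_of_hasCompactSupport
      hχc.smul_right
  · exact (hχ.mul (by fun_prop)).aestronglyMeasurable
  · rw [norm_mul, norm_mul, Real.norm_of_nonneg (mul_nonneg hC₀ (norm_nonneg y))]
    gcongr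
    exact ((fderiv ℝ f (z + s • y)).le_opNorm y).trans (by gcongr; exact hC _)
  · have := (hf.differentiable two_ne_zero (z + s • y)).hasFDerivAt.comp_hasDerivAt s
      (((hasDerivAt_id s).smul_const y).const_add z)
    simpa using this.const_mul (χ y)

end IsKernelPotential

/-- The average of `f` over all dilates of `η` by `t ∈ (0, δ]`, with weight `t`. When `η` is a
potential of a radial kernel, this is a function with Laplacian `χ_δ ∗ f - f` which is `O(δ²)` for
bounded `f`. -/
def dilationPotential [MeasurableSpace E] (μ : Measure E) (η : E → ℝ) (δ : ℝ) (f : E → ℝ) :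
    E → ℝ :=
  translateAverage ((volume.restrict (Ioc 0 δ)).prod μ) (fun p => p.1 * η p.2)
    (fun p => p.1 • p.2) f

namespace IsKernelPotential

variable [MeasurableSpace E] {μ : Measure E}

lemma dilation_weight_nonneg (hη : IsKernelPotential χ η) (δ : ℝ) :
    0 ≤ᵐ[(volume.restrict (Ioc 0 δ)).prod μ] fun p : ℝ × E => p.1 * η p.2 := by
  have hpos : ∀ᵐ p ∂(volume.restrict (Ioc 0 δ)).prod μ, p.1 ∈ Ioc 0 δ :=
    Measure.quasiMeasurePreserving_fst.ae (ae_restrict_mem measurableSet_Ioc)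
  exact hpos.mono fun p hp => mul_nonneg hp.1.le (hη.nonneg p.2)

lemma dilationPotential_nonneg (hη : IsKernelPotential χ η) (δ : ℝ) {f : E → ℝ}
    (hf : ∀ z, 0 ≤ f z) (z : E) : 0 ≤ dilationPotential μ η δ f z :=
  translateAverage_nonneg (hη.dilation_weight_nonneg δ) hf z

variable [BorelSpace E] [IsFiniteMeasureOnCompacts μ]

lemma integrable_dilation_weight (hη : IsKernelPotential χ η) (δ : ℝ) :
    Integrable (fun p : ℝ × E => p.1 * η p.2) ((volume.restrict (Ioc 0 δ)).prod μ) :=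
  Integrable.mul_prod continuous_id.integrableOn_Ioc.integrable hη.integrable

lemma dilationPotential_le [SFinite μ] (hη : IsKernelPotential χ η) {δ : ℝ} (hδ : 0 ≤ δ) {f : E → ℝ}
    (hf : ∀ z, 0 ≤ f z) (hf₁ : ∀ z, f z ≤ 1) (z : E) :
    dilationPotential μ η δ f z ≤ δ ^ 2 / 2 * ∫ y, η y ∂μ := by
  refine (translateAverage_le_integral (hη.dilation_weight_nonneg δ)
    (hη.integrable_dilation_weight δ) hf hf₁ z).trans_eq ?_
  rw [integral_prod_mul (fun t : ℝ => t) η, ← intervalIntegral.integral_of_le hδ, integral_id]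
  simp

lemma contDiff_dilationPotential [SecondCountableTopology E] (hη : IsKernelPotential χ η)
    (δ : ℝ) {f : E → ℝ} (hf : ContDiff ℝ (⊤ : ℕ∞) f) (hfc : HasCompactSupport f) :
    ContDiff ℝ (⊤ : ℕ∞) (dilationPotential μ η δ f) :=
  contDiff_translateAverage (hη.integrable_dilation_weight δ)
    (by fun_prop : Continuous fun p : ℝ × E => p.1 • p.2).aestronglyMeasurable hf hfc

end IsKernelPotential

lemma IsKernelPotential.laplacian_dilationPotential [MeasurableSpace E] [BorelSpace E]
    [FiniteDimensional ℝ E] {μ : Measure E} [μ.IsAddHaarMeasure] (hη : IsKernelPotential χ η)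
    (hχ : IsRadialKernel μ χ) {δ : ℝ} (hδ : 0 ≤ δ) {f : E → ℝ} (hf : ContDiff ℝ 2 f)
    (hfc : HasCompactSupport f) (z : E) :
    Δ (dilationPotential μ η δ f) z = translateAverage μ χ (δ • ·) f z - f z := by
  have hsmul : AEStronglyMeasurable (fun p : ℝ × E => p.1 • p.2)
      ((volume.restrict (Ioc 0 δ)).prod μ) := Continuous.aestronglyMeasurable (by fun_prop)
  have hint := integrable_translateAverage (hη.integrable_dilation_weight δ) hsmul
    (continuous_laplacian hf) (hasCompactSupport_laplacian hfc) z
  have hiter (t : ℝ) : ∫ y, (t * η y) • Δ f (z + t • y) ∂μ =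
      t * translateAverage μ η (t • ·) (Δ f) z := by
    simp only [translateAverage, smul_eq_mul, mul_assoc, integral_const_mul]
  have hF₀ : translateAverage μ χ ((0 : ℝ) • ·) f z = f z := by
    simp [translateAverage, integral_mul_const, hχ.integral_eq_one]
  have hint_left : IntervalIntegrable (fun t => t * translateAverage μ η (t • ·) (Δ f) z)
      volume 0 δ := by
    rw [intervalIntegrable_iff_integrableOn_Ioc_of_le hδ, IntegrableOn]
    simpa only [hiter] using hint.integral_prod_left
  rw [dilationPotential, laplacian_translateAverage (hη.integrable_dilation_weight δ) hsmul hf hfc,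
    translateAverage, integral_prod _ hint]
  simp only [hiter]
  rw [← intervalIntegral.integral_of_le hδ, intervalIntegral.integral_eq_sub_of_hasDerivAt
    (fun t _ => hη.hasDerivAt_translateAverage_smul hχ.continuous hχ.hasCompactSupport hf hfc z t)
    hint_left, hF₀]

end RadialKernel

section SmoothRamp

/-- A smooth convex nondecreasing function which vanishes on `(-∞, 1]` and has slope one on
`[2, ∞)`. -/
def smoothRamp (s : ℝ) : ℝ :=
  ∫ x in (1 : ℝ)..s, Real.smoothTransition (x - 1)

lemma hasDerivAt_smoothRamp (s : ℝ) : HasDerivAt smoothRamp (Real.smoothTransition (s - 1)) s :=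
  (Real.smoothTransition.continuous.comp (continuous_sub_right 1)).integral_hasStrictDerivAt 1 s
    |>.hasDerivAt

lemma deriv_smoothRamp : deriv smoothRamp = fun s => Real.smoothTransition (s - 1) :=
  funext fun s => (hasDerivAt_smoothRamp s).deriv

lemma contDiff_smoothRamp : ContDiff ℝ (⊤ : ℕ∞) smoothRamp := by
  refine contDiff_infty_iff_deriv.2 ⟨fun s => (hasDerivAt_smoothRamp s).differentiableAt, ?_⟩
  rw [deriv_smoothRamp]
  exact Real.smoothTransition.contDiff.comp (by fun_prop)

lemma monotone_deriv_smoothRamp : Monotone (deriv smoothRamp) := by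
  rw [deriv_smoothRamp]
  exact Real.smoothTransition.monotone.comp fun _ _ h => sub_le_sub_right h 1

lemma smoothRamp_eq_zero {s : ℝ} (hs : s ≤ 1) : smoothRamp s = 0 := by
  refine intervalIntegral.integral_zero_ae (Eventually.of_forall fun x hx => ?_)
  rw [uIoc_of_ge hs] at hx
  exact Real.smoothTransition.zero_of_nonpos (sub_nonpos.2 hx.2)

lemma smoothRamp_nonneg (s : ℝ) : 0 ≤ smoothRamp s := by
  rcases le_total s 1 with hs | hs
  · exact (smoothRamp_eq_zero hs).ge
  · exact intervalIntegral.integral_nonneg hs fun x _ => Real.smoothTransition.nonneg _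

end SmoothRamp

section WeaklySubharmonic

open Laplacian

lemma support_indicator_subset_of_eqOn_zero {X : Type*} {s t : Set X} {g : X → ℝ}
    (hg : ∀ x ∈ s \ t, g x = 0) : Function.support (s.indicator g) ⊆ t := by
  intro x hx
  rw [Function.mem_support, indicator_apply_ne_zero] at hx
  exact by_contra fun hxt => hx.2 (hg x ⟨hx.1, hxt⟩)

lemma integrableOn_mul_continuous_of_isCompact_closure {X : Type*} [TopologicalSpace X]
    [T2Space X] [MeasurableSpace X] [OpensMeasurableSpace X] {μ : Measure X} {s : Set X}
    {u f : X → ℝ} (hs : MeasurableSet s) (hcpt : IsCompact (closure s)) (hu : IntegrableOn u s μ)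
    (hf : Continuous f) : IntegrableOn (fun x => u x * f x) s μ :=
  hu.mul_continuousOn_of_subset hf.continuousOn hs hcpt subset_closure

variable {E : Type*} [NormedAddCommGroup E] [InnerProductSpace ℝ E] {Ω K : Set E} {g : E → ℝ}

lemma contDiff_indicator_of_eqOn_zero {n : WithTop ℕ∞} (hΩ : IsOpen Ω) (hK : IsClosed K)
    (hKΩ : K ⊆ Ω) (hg : ContDiff ℝ n g) (hgK : ∀ z ∈ Ω \ K, g z = 0) :
    ContDiff ℝ n (Ω.indicator g) := by
  refine contDiff_iff_contDiffAt.2 fun z => ?_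
  by_cases hz : z ∈ Ω
  · exact hg.contDiffAt.congr_of_eventuallyEq
      ((eqOn_indicator).eventuallyEq_of_mem (hΩ.mem_nhds hz))
  · refine contDiffAt_const (c := (0 : ℝ)) |>.congr_of_eventuallyEq ?_
    filter_upwards [hK.isOpen_compl.mem_nhds fun h => hz (hKΩ h)] with x hx
    exact by_contra fun h => hx (support_indicator_subset_of_eqOn_zero hgK h)

lemma mul_laplacian_smoothRamp_comp_le [FiniteDimensional ℝ E] {ρ Ψ : E → ℝ} {p q A v : ℝ}
    (hp : 0 ≤ p) (hq : 0 ≤ q)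
    (hρ : ContDiff ℝ 2 ρ) (hΨ : ContDiff ℝ 2 Ψ) {z : E} (hv : v ≤ 0) (hA : |Δ ρ z| ≤ A)
    (hz : 0 ≤ Δ Ψ z ∨ 2 ≤ -p * ρ z - q * Ψ z) :
    v * Δ (fun x => smoothRamp (-p * ρ x - q * Ψ x)) z ≤ p * A * |v| - q * (v * Δ Ψ z) := by
  set a := Real.smoothTransition (-p * ρ z - q * Ψ z - 1) with ha
  have ha₀ : 0 ≤ a := Real.smoothTransition.nonneg _
  have ha₁ : a ≤ 1 := Real.smoothTransition.le_one _
  have hramp : a * (-p * Δ ρ z - q * Δ Ψ z) ≤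
      Δ (fun x => smoothRamp (-p * ρ x - q * Ψ x)) z := by
    have hΔ : Δ (fun x => -p * ρ x - q * Ψ x) z = -p * Δ ρ z - q * Δ Ψ z :=
      (ContDiffAt.laplacian_sub (f₁ := (-p) • ρ) (f₂ := q • Ψ) (by fun_prop) (by fun_prop)).trans
        (by rw [InnerProductSpace.laplacian_smul _ hρ.contDiffAt,
          InnerProductSpace.laplacian_smul _ hΨ.contDiffAt]; rfl)
    have := deriv_mul_laplacian_le_laplacian_comp (w := fun x => -p * ρ x - q * Ψ x)
      (contDiff_infty.1 contDiff_smoothRamp 2) monotone_deriv_smoothRamp (by fun_prop) z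
    rwa [hΔ, deriv_smoothRamp] at this
  have hρ_part : a * (v * -Δ ρ z) ≤ A * |v| :=
    calc a * (v * -Δ ρ z) ≤ |a * (v * -Δ ρ z)| := le_abs_self _
      _ = a * (|v| * |Δ ρ z|) := by rw [abs_mul, abs_mul, abs_neg, abs_of_nonneg ha₀]
      _ ≤ 1 * (|v| * A) := by gcongr
      _ = A * |v| := by ring
  have hΨ_part : v * Δ Ψ z ≤ a * (v * Δ Ψ z) := by
    rcases hz with hz | hz
    · nlinarith [mul_nonneg (neg_nonneg.2 hv) hz]
    · rw [ha, Real.smoothTransition.one_of_one_le (by linarith), one_mul]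
  calc v * Δ (fun x => smoothRamp (-p * ρ x - q * Ψ x)) z
      ≤ v * (a * (-p * Δ ρ z - q * Δ Ψ z)) := mul_le_mul_of_nonpos_left hramp hv
    _ = p * (a * (v * -Δ ρ z)) - q * (a * (v * Δ Ψ z)) := by ring
    _ ≤ p * (A * |v|) - q * (v * Δ Ψ z) := by gcongr
    _ = p * A * |v| - q * (v * Δ Ψ z) := by ring

variable [FiniteDimensional ℝ E] [MeasurableSpace E]

/-- `Δu ≥ 0` on `Ω` in the sense of distributions. -/
def IsWeaklySubharmonicOn (μ : Measure E) (Ω : Set E) (u : E → ℝ) : Prop :=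
  ∀ φ : E → ℝ, ContDiff ℝ (⊤ : ℕ∞) φ → HasCompactSupport φ → tsupport φ ⊆ Ω → (∀ z, 0 ≤ φ z) →
    0 ≤ ∫ z in Ω, u z * Δ φ z ∂μ

variable [BorelSpace E] {μ : Measure E} {u : E → ℝ}

lemma IsWeaklySubharmonicOn.setIntegral_mul_laplacian_nonneg (hu : IsWeaklySubharmonicOn μ Ω u)
    (hΩ : IsOpen Ω) (hK : IsCompact K) (hKΩ : K ⊆ Ω) (hg : ContDiff ℝ (⊤ : ℕ∞) g)
    (hg_nonneg : ∀ z, 0 ≤ g z) (hgK : ∀ z ∈ Ω \ K, g z = 0) :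
    0 ≤ ∫ z in Ω, u z * Δ g z ∂μ := by
  have hsupp : tsupport (Ω.indicator g) ⊆ K :=
    closure_minimal (support_indicator_subset_of_eqOn_zero hgK) hK.isClosed
  refine (hu (Ω.indicator g) (contDiff_indicator_of_eqOn_zero hΩ hK.isClosed hKΩ hg hgK)
    (hK.of_isClosed_subset (isClosed_tsupport _) hsupp) (hsupp.trans hKΩ)
    fun z => indicator_nonneg (fun _ _ => hg_nonneg _) z).trans_eq ?_
  refine setIntegral_congr_fun hΩ.measurableSet fun z hz => ?_
  have hnear : Ω.indicator g =ᶠ[𝓝 z] g := eqOn_indicator.eventuallyEq_of_mem (hΩ.mem_nhds hz)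
  simp only [(InnerProductSpace.laplacian_congr_nhds hnear).eq_of_nhds]

lemma setIntegral_mul_laplacian_le (hΩ : IsOpen Ω) (hcpt : IsCompact (closure Ω))
    (hu_int : IntegrableOn u Ω μ) (hu_nonpos : ∀ z ∈ Ω, u z ≤ 0)
    (hu : IsWeaklySubharmonicOn μ Ω u) {ρ Ψ : E → ℝ} {t T A : ℝ} (ht : 0 < t) (hT : 0 < T)
    (hρ : ContDiff ℝ (⊤ : ℕ∞) ρ) (hρt : closure Ω ∩ {z | t / 4 ≤ -ρ z} ⊆ Ω)
    (hρA : ∀ z ∈ Ω, |Δ ρ z| ≤ A) (hΨ : ContDiff ℝ (⊤ : ℕ∞) Ψ) (hΨ_nonneg : ∀ z, 0 ≤ Ψ z)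
    (hΨ_le : ∀ z, Ψ z ≤ T) (hΨ_sub : ∀ z ∈ Ω, -ρ z < t → 0 ≤ Δ Ψ z) :
    ∫ z in Ω, u z * Δ Ψ z ∂μ ≤ 2 * T / t * A * ∫ z in Ω, |u z| ∂μ := by
  have hpos : 0 ≤ 4 / t ∧ 0 ≤ 2 / T := ⟨by positivity, by positivity⟩
  set g : E → ℝ := fun z => smoothRamp (-(4 / t) * ρ z - 2 / T * Ψ z)
  have hg : ContDiff ℝ (⊤ : ℕ∞) g := contDiff_smoothRamp.comp (by fun_prop)
  have htest : 0 ≤ ∫ z in Ω, u z * Δ g z ∂μ := by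
    refine hu.setIntegral_mul_laplacian_nonneg hΩ
      (hcpt.inter_right (isClosed_le (by fun_prop) hρ.continuous.neg)) hρt hg
      (fun z => smoothRamp_nonneg _) fun z hz => smoothRamp_eq_zero (not_lt.1 fun h => hz.2 ?_)
    refine ⟨subset_closure hz.1, ?_⟩
    have : 1 < 4 / t * -ρ z := by linarith [mul_nonneg hpos.2 (hΨ_nonneg z)]
    rw [div_mul_eq_mul_div, one_lt_div ht] at this
    exact (by linarith : t / 4 ≤ -ρ z)
  have hpointwise : ∀ z ∈ Ω, u z * Δ g z ≤ 4 / t * A * |u z| - 2 / T * (u z * Δ Ψ z) := by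
    refine fun z hz => mul_laplacian_smoothRamp_comp_le hpos.1 hpos.2 (contDiff_infty.1 hρ 2)
      (contDiff_infty.1 hΨ 2) (hu_nonpos z hz) (hρA z hz) ?_
    refine (lt_or_ge (-ρ z) t).imp (hΨ_sub z hz) fun hz_deep => ?_
    have hρ_term : 4 ≤ 4 / t * -ρ z := by
      rw [div_mul_eq_mul_div, le_div_iff₀ ht]; linarith
    have hΨ_term : 2 / T * Ψ z ≤ 2 := by
      rw [div_mul_eq_mul_div, div_le_iff₀ hT]; linarith [hΨ_le z]
    linarith
  have hint {f : E → ℝ} (hf : ContDiff ℝ (⊤ : ℕ∞) f) :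
      IntegrableOn (fun z => u z * Δ f z) Ω μ :=
    integrableOn_mul_continuous_of_isCompact_closure hΩ.measurableSet hcpt hu_int
      (continuous_laplacian (contDiff_infty.1 hf 2))
  have hint_bound := hu_int.abs.const_mul (4 / t * A)
  have hle := setIntegral_mono_on (hint hg) (hint_bound.sub ((hint hΨ).const_mul (2 / T)))
    hΩ.measurableSet hpointwise
  simp only [Pi.sub_apply] at hle
  rw [integral_sub hint_bound ((hint hΨ).const_mul (2 / T)), integral_const_mul,
    integral_const_mul] at hle
  have hfinal : 2 / T * ∫ z in Ω, u z * Δ Ψ z ∂μ ≤ 4 / t * A * ∫ z in Ω, |u z| ∂μ := by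
    linarith
  calc ∫ z in Ω, u z * Δ Ψ z ∂μ = T / 2 * (2 / T * ∫ z in Ω, u z * Δ Ψ z ∂μ) := by field_simp
    _ ≤ T / 2 * (4 / t * A * ∫ z in Ω, |u z| ∂μ) := by gcongr
    _ = 2 * T / t * A * ∫ z in Ω, |u z| ∂μ := by ring

end WeaklySubharmonic

section SmoothCutoff

variable {E : Type*} [NormedAddCommGroup E] [NormedSpace ℝ E] {V : Set E}

/-- `f` is a smooth cutoff function for `V`: it has compact support, takes values in `[0, 1]` and
vanishes off `V`. Its topological support may touch the boundary of `V`. -/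
structure IsSmoothCutoff (V : Set E) (f : E → ℝ) : Prop where
  contDiff : ContDiff ℝ (⊤ : ℕ∞) f
  hasCompactSupport : HasCompactSupport f
  nonneg : ∀ z, 0 ≤ f z
  le_one : ∀ z, f z ≤ 1
  eq_zero : ∀ z ∉ V, f z = 0

lemma IsSmoothCutoff.norm_le_one {f : E → ℝ} (hf : IsSmoothCutoff V f) (z : E) : ‖f z‖ ≤ 1 := by
  rw [Real.norm_of_nonneg (hf.nonneg z)]
  exact hf.le_one z

variable [FiniteDimensional ℝ E]

lemma exists_isSmoothCutoff_tendsto_one (hV : IsOpen V) (hcpt : IsCompact (closure V)) :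
    ∃ f : ℕ → E → ℝ, (∀ k, IsSmoothCutoff V (f k)) ∧
      ∀ z ∈ V, Tendsto (fun k => f k z) atTop (𝓝 1) := by
  obtain ⟨g, hgV, hg, hg_range⟩ := hV.exists_contDiff_support_eq (n := ⊤)
  have hzero (k : ℕ) (z : E) (hz : z ∉ V) : Real.smoothTransition (k * g z) = 0 := by
    have : g z = 0 := by simpa [← hgV] using hz
    rw [this, mul_zero, Real.smoothTransition.zero]
  refine ⟨fun k z => Real.smoothTransition (k * g z), fun k => ⟨?_, ?_, ?_, ?_, hzero k⟩,
    fun z hz => ?_⟩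
  · exact Real.smoothTransition.contDiff.comp (contDiff_const.mul hg)
  · exact HasCompactSupport.intro hcpt fun z hz => hzero k z fun h => hz (subset_closure h)
  · exact fun z => Real.smoothTransition.nonneg _
  · exact fun z => Real.smoothTransition.le_one _
  · have hgz : 0 < g z := (hg_range ⟨z, rfl⟩).1.lt_of_ne' (by rwa [← hgV] at hz)
    refine tendsto_const_nhds.congr' ?_
    filter_upwards [(tendsto_natCast_atTop_atTop.atTop_mul_const hgz).eventually_ge_atTop 1]
      with k hk
    exact (Real.smoothTransition.one_of_one_le hk).symm

lemma setIntegral_le_of_forall_isSmoothCutoff [MeasurableSpace E] [OpensMeasurableSpace E]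
    {μ : Measure E} (hV : IsOpen V) (hcpt : IsCompact (closure V)) {g : E → ℝ} {B : ℝ}
    (hg : IntegrableOn g V μ) (hB : ∀ f, IsSmoothCutoff V f → ∫ z in V, f z * g z ∂μ ≤ B) :
    ∫ z in V, g z ∂μ ≤ B := by
  obtain ⟨f, hf, hlim⟩ := exists_isSmoothCutoff_tendsto_one hV hcpt
  refine le_of_tendsto' (x := atTop) ?_ fun k => hB (f k) (hf k)
  refine tendsto_integral_of_dominated_convergence (fun z => ‖g z‖) (fun k => ?_) hg.norm
    (fun k => Eventually.of_forall fun z => ?_) ?_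
  · exact (hf k).contDiff.continuous.aestronglyMeasurable.mul hg.aestronglyMeasurable
  · rw [norm_mul]
    exact mul_le_of_le_one_left (norm_nonneg _) ((hf k).norm_le_one z)
  · filter_upwards [ae_restrict_mem hV.measurableSet] with z hz
    simpa using (hlim z hz).mul_const (g z)

end SmoothCutoff

section Regularization

open Convolution

variable {E : Type*} [NormedAddCommGroup E] [NormedSpace ℝ E]

/-- The rescaling `χ_δ(x) = δ^{-d} χ(x / δ)`, `d = dim E`, of a kernel `χ`; it has the same integral
as `χ`. -/
def rescaledKernel (χ : E → ℝ) (δ : ℝ) (x : E) : ℝ :=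
  (δ ^ Module.finrank ℝ E)⁻¹ * χ (δ⁻¹ • x)

variable [FiniteDimensional ℝ E] [MeasurableSpace E] [BorelSpace E] {μ : Measure E}
  [μ.IsAddHaarMeasure] {χ u f : E → ℝ} {δ : ℝ}

lemma integrable_rescaledKernel (hχ : Integrable χ μ) (hδ : δ ≠ 0) :
    Integrable (rescaledKernel χ δ) μ :=
  (hχ.comp_smul (inv_ne_zero hδ)).const_mul _

lemma integral_mul_rescaledKernel_sub (χ f : E → ℝ) (hδ : 0 < δ) (ζ : E) :
    ∫ z, f z * rescaledKernel χ δ (z - ζ) ∂μ = translateAverage μ χ (δ • ·) f ζ := by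
  have hshift (x : E) : f (x + ζ) * rescaledKernel χ δ (x + ζ - ζ) =
      (δ ^ Module.finrank ℝ E)⁻¹ * (fun y => χ y * f (ζ + δ • y)) (δ⁻¹ • x) := by
    simp only [rescaledKernel, add_sub_cancel_right, smul_inv_smul₀ hδ.ne', add_comm ζ]
    ring
  rw [← integral_add_right_eq_self _ ζ, funext hshift, integral_const_mul,
    Measure.integral_comp_inv_smul_of_nonneg μ (fun y => χ y * f (ζ + δ • y)) hδ.le, smul_eq_mul,
    inv_mul_cancel_left₀ (by positivity)]
  rfl

variable {ν : Measure E} [SFinite ν]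

lemma integrable_convolution_rescaledKernel (hχ : Integrable χ μ) (hδ : δ ≠ 0)
    (hu : Integrable u ν) :
    Integrable (u ⋆[ContinuousLinearMap.mul ℝ ℝ, ν] rescaledKernel χ δ) μ :=
  (hu.convolution_integrand (ContinuousLinearMap.mul ℝ ℝ)
    (integrable_rescaledKernel hχ hδ)).integral_prod_left

lemma integral_mul_convolution_rescaledKernel (hχ : Integrable χ μ) (hδ : 0 < δ)
    (hu : Integrable u ν) (hf : Continuous f) {C : ℝ} (hfC : ∀ z, ‖f z‖ ≤ C) :
    ∫ z, f z * (u ⋆[ContinuousLinearMap.mul ℝ ℝ, ν] rescaledKernel χ δ) z ∂μ =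
      ∫ ζ, u ζ * translateAverage μ χ (δ • ·) f ζ ∂ν := by
  have hint : Integrable (fun p : E × E => f p.1 * (u p.2 * rescaledKernel χ δ (p.1 - p.2)))
      (μ.prod ν) :=
    (hu.convolution_integrand (ContinuousLinearMap.mul ℝ ℝ)
      (integrable_rescaledKernel hχ hδ.ne')).bdd_mul (hf.comp continuous_fst).aestronglyMeasurable
      (Eventually.of_forall fun p => hfC p.1)
  simp only [convolution, ContinuousLinearMap.mul_apply', ← integral_const_mul]
  rw [integral_integral_swap hint]
  simp only [mul_left_comm (f _), integral_const_mul, integral_mul_rescaledKernel_sub χ f hδ]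

end Regularization

section BoundaryLayer

open Laplacian Convolution

variable {E : Type*} [NormedAddCommGroup E] [InnerProductSpace ℝ E] [FiniteDimensional ℝ E]
  [MeasurableSpace E] [BorelSpace E] {μ : Measure E} [μ.IsAddHaarMeasure] {χ η u f : E → ℝ}
  {Ω V : Set E} {δ : ℝ}

lemma IsSmoothCutoff.setIntegral_mul_convolution_sub (hf : IsSmoothCutoff V f)
    (hη : IsKernelPotential χ η) (hχ : IsRadialKernel μ χ) (hΩ : IsOpen Ω)
    (hcpt : IsCompact (closure Ω)) (hVΩ : V ⊆ Ω) (hu : IntegrableOn u Ω μ) (hδ : 0 < δ) :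
    ∫ z in V, f z * ((u ⋆[ContinuousLinearMap.mul ℝ ℝ, μ.restrict Ω] rescaledKernel χ δ) z - u z) ∂μ
      = ∫ z in Ω, u z * Δ (dilationPotential μ η δ f) z ∂μ := by
  have hf_bound := Eventually.of_forall (f := ae μ) hf.norm_le_one
  have hconv_int := (integrable_convolution_rescaledKernel hχ.integrable hδ.ne' hu).bdd_mul
    hf.contDiff.continuous.aestronglyMeasurable hf_bound
  have hfu_int : IntegrableOn (fun z => u z * f z) Ω μ :=
    integrableOn_mul_continuous_of_isCompact_closure hΩ.measurableSet hcpt hu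
      hf.contDiff.continuous
  have havg_int : IntegrableOn (fun z => u z * translateAverage μ χ (δ • ·) f z) Ω μ :=
    integrableOn_mul_continuous_of_isCompact_closure hΩ.measurableSet hcpt hu
      (contDiff_translateAverage hχ.integrable (by fun_prop) hf.contDiff
        hf.hasCompactSupport).continuous
  simp only [hη.laplacian_dilationPotential hχ hδ.le (contDiff_infty.1 hf.contDiff 2)
    hf.hasCompactSupport, mul_sub, mul_comm (f _) (u _)]
  rw [integral_sub havg_int hfu_int, ← integral_mul_convolution_rescaledKernel hχ.integrable hδ hu
    hf.contDiff.continuous hf.norm_le_one,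
    integral_sub hconv_int.integrableOn (hfu_int.mono_set hVΩ)]
  congr 1
  · exact setIntegral_eq_integral_of_forall_compl_eq_zero
      fun z hz => by rw [hf.eq_zero z hz, zero_mul]
  · exact (setIntegral_eq_of_subset_of_forall_sdiff_eq_zero hΩ.measurableSet hVΩ
      fun z hz => by rw [hf.eq_zero z hz.2, mul_zero]).symm

lemma IsSmoothDefiningFunction.exists_setIntegral_mul_laplacian_dilationPotential_le {ρ : E → ℝ}
    (hρ : IsSmoothDefiningFunction Ω ρ) (hΩ : IsOpen Ω) (hcpt : IsCompact (closure Ω))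
    (hη : IsKernelPotential χ η) (hχ : IsRadialKernel μ χ) :
    ∃ b > 0, ∀ u : E → ℝ, IntegrableOn u Ω μ → (∀ z ∈ Ω, u z ≤ 0) → IsWeaklySubharmonicOn μ Ω u →
      ∀ δ > 0, ∀ f, IsSmoothCutoff {z ∈ Ω | δ < infDist z (frontier Ω)} f →
        ∫ z in Ω, u z * Δ (dilationPotential μ η δ f) z ∂μ ≤ b * δ * ∫ z in Ω, |u z| ∂μ := by
  obtain ⟨c, hc, hcρ⟩ := hρ.exists_mul_infDist_frontier_le hcpt
  obtain ⟨A, hA, hρA⟩ := (hcpt.image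
    (continuous_laplacian (contDiff_infty.1 hρ.contDiff 2))).isBounded.exists_pos_norm_le
  set I := ∫ y, η y ∂μ
  have hI : 0 ≤ I := integral_nonneg hη.nonneg
  refine ⟨2 * (I + 1) / c * A, by positivity, fun u hu_int hu_nonpos hu δ hδ f hf => ?_⟩
  refine (setIntegral_mul_laplacian_le hΩ hcpt hu_int hu_nonpos hu (t := c * δ)
    (T := (I + 1) * δ ^ 2) (A := A) (by positivity) (by positivity) hρ.contDiff
    (hρ.closure_inter_superlevel_subset (by positivity))
    (fun z hz => hρA _ (mem_image_of_mem _ (subset_closure hz)))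
    (hη.contDiff_dilationPotential δ hf.contDiff hf.hasCompactSupport)
    (hη.dilationPotential_nonneg δ hf.nonneg) (fun z => ?_) fun z hz hz_shallow => ?_).trans_eq ?_
  · refine (hη.dilationPotential_le hδ.le hf.nonneg hf.le_one z).trans ?_
    nlinarith [sq_nonneg δ, mul_nonneg hI (sq_nonneg δ)]
  · have hz_off : z ∉ {z ∈ Ω | δ < infDist z (frontier Ω)} := fun h => by
      linarith [hcρ z hz, mul_lt_mul_of_pos_left h.2 hc]
    rw [hη.laplacian_dilationPotential hχ hδ.le (contDiff_infty.1 hf.contDiff 2)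
      hf.hasCompactSupport, hf.eq_zero z hz_off, sub_zero]
    exact translateAverage_nonneg (Eventually.of_forall hχ.nonneg) hf.nonneg z
  · field_simp

theorem statement3_general [Nontrivial E] {ρ : E → ℝ} (hΩ : IsOpen Ω)
    (hΩ_bdd : Bornology.IsBounded Ω) (hρ : IsSmoothDefiningFunction Ω ρ)
    (hχ : IsRadialKernel μ χ) :
    ∃ b > 0, ∀ u : E → ℝ, IntegrableOn u Ω μ → (∀ z ∈ Ω, u z ≤ 0) → IsWeaklySubharmonicOn μ Ω u →
      ∀ δ > 0, ∫ z in {z ∈ Ω | δ < infDist z (frontier Ω)},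
        ((u ⋆[ContinuousLinearMap.mul ℝ ℝ, μ.restrict Ω] rescaledKernel χ δ) z - u z) ∂μ
          ≤ b * δ * ∫ z in Ω, |u z| ∂μ := by
  have hcpt := hΩ_bdd.isCompact_closure
  obtain ⟨η, hη⟩ :=
    exists_isKernelPotential hχ.continuous hχ.nonneg hχ.radial hχ.hasCompactSupport
  obtain ⟨b, hb, hbound⟩ :=
    hρ.exists_setIntegral_mul_laplacian_dilationPotential_le hΩ hcpt hη hχ
  refine ⟨b, hb, fun u hu_int hu_nonpos hu δ hδ => ?_⟩
  have hVΩ : {z ∈ Ω | δ < infDist z (frontier Ω)} ⊆ Ω := sep_subset _ _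
  refine setIntegral_le_of_forall_isSmoothCutoff
    (hΩ.inter (isOpen_lt continuous_const (continuous_infDist_pt _)))
    (hΩ_bdd.subset hVΩ).isCompact_closure ?_ fun f hf => ?_
  · exact (integrable_convolution_rescaledKernel hχ.integrable hδ.ne' hu_int).integrableOn.sub
      (hu_int.mono_set hVΩ)
  · rw [hf.setIntegral_mul_convolution_sub hη hχ hΩ hcpt hVΩ hu_int hδ]
    exact hbound u hu_int hu_nonpos hu δ hδ f hf

end BoundaryLayer

section MixedDiscriminant

open Polynomial

variable {R : Type*} [CommRing R]

lemma sum_range_neg_one_pow_mul_choose_mul_eval {k : ℕ} {P : R[X]} (hP : P.natDegree ≤ k) :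
    ∑ j ∈ Finset.range (k + 1), (-1 : R) ^ (k - j) * k.choose j * P.eval (j : R) =
      k.factorial * P.coeff k := by
  have hdiff : (fwdDiff 1)^[k] (fun x => P.eval x) (0 : R) = k.factorial * P.coeff k := by
    rcases hP.lt_or_eq with hlt | rfl
    · simp [fwdDiff_iter_eq_zero_of_degree_lt hlt, coeff_eq_zero_of_natDegree_lt hlt]
    · simp [fwdDiff_iter_degree_eq_factorial, mul_comm]
  rw [← hdiff, fwdDiff_iter_eq_sum_shift]
  simp [zsmul_eq_mul]

lemma exists_natDegree_le_eval_eq_det_add_smul_one {ι : Type*} [Fintype ι] [DecidableEq ι]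
    [Nontrivial R] {k : ℕ} (hk : Fintype.card ι = k + 1) (A : Matrix ι ι R) :
    ∃ q : R[X], q.natDegree ≤ k ∧ q.coeff k = A.trace ∧
      ∀ x, (A + x • (1 : Matrix ι ι R)).det = q.eval x + x ^ (k + 1) := by
  have : Nonempty ι := Fintype.card_pos_iff.1 (by lia)
  have hdeg : (-A).charpoly.natDegree = k + 1 := by rw [Matrix.charpoly_natDegree_eq_dim, hk]
  refine ⟨(-A).charpoly.eraseLead, ?_, ?_, fun x => ?_⟩
  · simpa [hdeg] using eraseLead_natDegree_le (-A).charpoly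
  · have := Matrix.trace_eq_neg_charpoly_coeff (-A)
    rw [Matrix.trace_neg, neg_inj, hk, Nat.add_sub_cancel] at this
    rw [eraseLead_coeff_of_ne _ (by lia), this]
  · have hdet : (A + x • (1 : Matrix ι ι R)).det = (-A).charpoly.eval x := by
      rw [Matrix.eval_charpoly, sub_neg_eq_add, add_comm, Matrix.smul_one_eq_diagonal]
      rfl
    conv_lhs => rw [hdet, ← eraseLead_add_monomial_natDegree_leadingCoeff (-A).charpoly]
    simp [hdeg, (Matrix.charpoly_monic (-A)).leadingCoeff]

lemma sum_range_neg_one_pow_mul_choose_mul_det {ι : Type*} [Fintype ι] [DecidableEq ι]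
    [Nontrivial R] {k : ℕ} (hk : Fintype.card ι = k + 1) (A : Matrix ι ι R) :
    ∑ c ∈ Finset.range (k + 1), (-1 : R) ^ (k - c) * k.choose c *
      ((A + (c : R) • (1 : Matrix ι ι R)).det - (c : R) ^ (k + 1)) = k.factorial * A.trace := by
  obtain ⟨q, hq, hq_coeff, hdet⟩ := exists_natDegree_le_eval_eq_det_add_smul_one hk A
  simp only [hdet, add_sub_cancel_right, sum_range_neg_one_pow_mul_choose_mul_eval hq, hq_coeff]

lemma sum_univ_finset_of_card {ι M : Type*} [Fintype ι] [DecidableEq ι] [AddCommMonoid M] {k : ℕ}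
    (hk : Fintype.card ι = k + 1) (i₀ : ι) {f : Finset ι → M} {g h : ℕ → M}
    (hg : ∀ S, i₀ ∉ S → f S = g S.card) (hh : ∀ S, i₀ ∉ S → f (insert i₀ S) = h S.card) :
    ∑ S, f S = ∑ c ∈ Finset.range (k + 1), k.choose c • (g c + h c) := by
  have hcard : (Finset.univ.erase i₀).card = k := by simp [hk]
  have hmem {S : Finset ι} (hS : S ∈ (Finset.univ.erase i₀).powerset) : i₀ ∉ S := fun h =>
    Finset.notMem_erase i₀ _ (Finset.mem_powerset.1 hS h)
  rw [← Finset.powerset_univ, ← Finset.insert_erase (Finset.mem_univ i₀),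
    Finset.sum_powerset_insert (Finset.notMem_erase _ _),
    Finset.sum_congr rfl fun S hS => hg S (hmem hS),
    Finset.sum_congr rfl fun S hS => hh S (hmem hS),
    Finset.sum_powerset_apply_card, Finset.sum_powerset_apply_card, hcard,
    ← Finset.sum_add_distrib]
  simp only [smul_add]

lemma mixedDet_ite_zero_one (k : ℕ) (A : Matrix (Fin (k + 1)) (Fin (k + 1)) ℂ) :
    mixedDet (k + 1) (fun i => if i = 0 then A else 1) = A.trace / (k + 1 : ℕ) := by
  have hsum (S : Finset (Fin (k + 1))) (hS : 0 ∉ S) :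
      ∑ i ∈ S, (if i = 0 then A else 1) = (S.card : ℂ) • 1 := by
    rw [Finset.sum_congr rfl fun i hi => if_neg fun h : i = 0 => hS (h ▸ hi), Finset.sum_const,
      Nat.cast_smul_eq_nsmul]
  have hpolar : ∑ S : Finset (Fin (k + 1)), (-1 : ℂ) ^ (k + 1 - S.card) *
      (∑ i ∈ S, if i = 0 then A else 1).det = k.factorial * A.trace := by
    rw [← sum_range_neg_one_pow_mul_choose_mul_det (Fintype.card_fin _) A,
      sum_univ_finset_of_card (Fintype.card_fin _) 0
        (g := fun c => (-1) ^ (k + 1 - c) * (c : ℂ) ^ (k + 1))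
        (h := fun c => (-1) ^ (k - c) * (A + (c : ℂ) • (1 : Matrix _ _ ℂ)).det)]
    · refine Finset.sum_congr rfl fun c hc => ?_
      rw [Nat.sub_add_comm (Finset.mem_range_succ_iff.1 hc), pow_succ, nsmul_eq_mul]
      ring
    · exact fun S hS => by simp [hsum S hS]
    · exact fun S hS => by simp [Finset.sum_insert hS, Finset.card_insert_of_notMem hS, hsum S hS]
  have : (k.factorial : ℂ) ≠ 0 := by exact_mod_cast k.factorial_ne_zero
  rw [mixedDet, hpolar, Nat.factorial_succ]
  push_cast
  field_simp

lemma mixedHess_ite_zero_one {n m : ℕ} (hm : 1 ≤ m) (hmn : m ≤ n)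
    (A : Matrix (Fin n) (Fin n) ℂ) :
    mixedHess n m (fun i => if (i : ℕ) = 0 then A else 1) = A.trace.re / n := by
  obtain ⟨k, rfl⟩ := Nat.exists_eq_succ_of_ne_zero (by lia : n ≠ 0)
  have hpadded : padded (k + 1) m (fun i => if (i : ℕ) = 0 then A else 1) =
      fun i => if i = 0 then A else 1 := by
    funext i
    by_cases hi : i = 0
    · simp [padded, hi, Nat.lt_of_succ_le hm]
    · simp [padded, Fin.val_eq_zero_iff, hi]
  rw [mixedHess, hpadded, mixedDet_ite_zero_one, Complex.div_natCast_re]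

lemma isMPositiveMatrix_one {n m : ℕ} (hmn : m ≤ n) : IsMPositiveMatrix n m 1 := by
  refine ⟨Matrix.isHermitian_one, fun k hk hkm => ?_⟩
  have := mixedHess_ite_zero_one hk (hkm.trans hmn) (1 : Matrix (Fin n) (Fin n) ℂ)
  simp only [ite_self] at this
  rw [this, Matrix.trace_one, Fintype.card_fin, Complex.natCast_re]
  positivity

end MixedDiscriminant

section ComplexSpace

open Laplacian

instance (n : ℕ) : (volume : Measure (Cn n)).IsAddHaarMeasure :=
  ContinuousLinearEquiv.isAddHaarMeasure_map (EuclideanSpace.equiv (Fin n) ℂ).symm volume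

variable {n m : ℕ} {Ω : Set (Cn n)} {χ ρ u : Cn n → ℝ}

lemma laplacian_eq_sum_d2 (f : Cn n → ℝ) (z : Cn n) :
    Δ f z = ∑ j, (d2 f z (EuclideanSpace.single j 1) (EuclideanSpace.single j 1) +
      d2 f z (EuclideanSpace.single j Complex.I) (EuclideanSpace.single j Complex.I)) := by
  simp only [InnerProductSpace.laplacian_eq_iteratedFDeriv_orthonormalBasis f
    (Pi.orthonormalBasis fun _ : Fin n => Complex.orthonormalBasisOneI), Fintype.sum_sigma]
  simp [d2, Pi.orthonormalBasis_apply]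

lemma re_trace_complexHessian (f : Cn n → ℝ) (z : Cn n) :
    (complexHessian f z).trace.re = Δ f z / 4 := by
  simp only [Matrix.trace, Matrix.diag_apply, complexHessian, Complex.re_sum, laplacian_eq_sum_d2,
    Finset.sum_div]
  refine Finset.sum_congr rfl fun j _ => ?_
  simp
  ring

lemma IsMSubharmonicOn.isWeaklySubharmonicOn (hm : 1 ≤ m) (hmn : m ≤ n)
    (hu : IsMSubharmonicOn n m Ω u) : IsWeaklySubharmonicOn volume Ω u := by
  intro φ hφ hφc hφΩ hφ_nonneg
  have htest := hu.2.2 (fun _ => 1) (fun _ => isMPositiveMatrix_one hmn) φ ⟨hφ, hφc, hφΩ⟩ hφ_nonneg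
  simp only [mixedHess_ite_zero_one hm hmn, re_trace_complexHessian, mul_div_assoc',
    integral_div] at htest
  have hn : (0 : ℝ) < n := by exact_mod_cast hm.trans hmn
  by_contra! hneg
  exact htest.not_gt (div_neg_of_neg_of_pos (div_neg_of_neg_of_pos hneg four_pos) hn)

lemma finrank_real_Cn (n : ℕ) : Module.finrank ℝ (Cn n) = 2 * n := by
  rw [← Module.finrank_mul_finrank ℝ ℂ (Cn n), Complex.finrank_real_complex,
    finrank_euclideanSpace_fin]

lemma IsMollifier.isRadialKernel (hχ : IsMollifier n χ) : IsRadialKernel volume χ where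
  continuous := hχ.1.continuous
  nonneg := hχ.2.1
  radial := hχ.2.2.1
  hasCompactSupport := (isCompact_closedBall 0 1).of_isClosed_subset (isClosed_tsupport χ)
    hχ.2.2.2.1
  integral_eq_one := hχ.2.2.2.2

lemma IsSPCDefining.isSmoothDefiningFunction (hρ : IsSPCDefining n m Ω ρ) :
    IsSmoothDefiningFunction Ω ρ := by
  obtain ⟨-, -, hρ_smooth, U, -, -, hΩU, hρ_frontier, -⟩ := hρ
  exact ⟨hρ_smooth, fun z hz => (hΩU.subset hz).2, fun z hz => (hρ_frontier z hz).1,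
    fun z hz => (hρ_frontier z hz).2⟩

open Convolution in
lemma regularize_eq_convolution (Ω : Set (Cn n)) (χ u : Cn n → ℝ) (δ : ℝ) :
    regularize n Ω χ u δ =
      u ⋆[ContinuousLinearMap.mul ℝ ℝ, volume.restrict Ω] rescaledKernel χ δ := by
  funext z
  simp only [regularize, scaledMollifier, convolution, rescaledKernel, finrank_real_Cn,
    ContinuousLinearMap.mul_apply']

end ComplexSpace

/-- **Lemma 2.2 (3).** Let `Ω ⋐ ℂⁿ` be a bounded strongly `m`-pseudoconvex domain and
`u ∈ SH_m(Ω) ∩ L¹(Ω)` with `u ≤ 0`. There is a constant `b_n > 0`, independent of `u` and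
`δ`, such that for `0 < δ < δ₀ := diam Ω`,
`∫_{Ω_δ} (u_δ - u) dλ_{2n} ≤ b_n δ ‖u‖₁`. -/
theorem statement3 (n m : ℕ) (hm1 : 1 ≤ m) (hmn : m ≤ n) (Ω : Set (Cn n))
    (hΩ : StronglyMPseudoconvex n m Ω)
    (χ : Cn n → ℝ) (hχ : IsMollifier n χ) :
    ∃ b : ℝ, 0 < b ∧
      ∀ u : Cn n → ℝ, IsMSubharmonicOn n m Ω u → MeasureTheory.IntegrableOn u Ω →
        (∀ z ∈ Ω, u z ≤ 0) →
        ∀ δ : ℝ, 0 < δ → δ < Metric.diam Ω →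
          (∫ z in {z ∈ Ω | δ < Metric.infDist z (frontier Ω)},
              (regularize n Ω χ u δ z - u z)) ≤
            b * δ * ∫ z in Ω, |u z| := by
  obtain ⟨ρ, hρ⟩ := hΩ
  have : NeZero n := ⟨by lia⟩
  obtain ⟨b, hb, hbound⟩ := statement3_general hρ.1 hρ.2.1 hρ.isSmoothDefiningFunction
    hχ.isRadialKernel
  refine ⟨b, hb, fun u hu hu_int hu_nonpos δ hδ _ => ?_⟩
  rw [regularize_eq_convolution]
  exact hbound u hu_int hu_nonpos (hu.isWeaklySubharmonicOn hm1 hmn) δ hδ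

end
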